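/- Let I ⊆ ℝ be a nonempty open interval, p ∈ I, n ∈ ℕ∪{0}, and μ a bounded signed Borel measure on [0,1]. Then the function f := φ⁻_{p,n}, restricted to I, satisfies ∫_{[0,1]} f((1−t)x + t y) dμ(t) ≥ 0 for all x, y ∈ I with x < y if and only if both (−1)^n μ_n^-(λ) ≥ 0 for all λ ∈ [0,1] and (−1)^n μ_n(λ) ≥ 0 for all λ ∈ [1,∞). -/

import Mathlib

open MeasureTheory Set

/-- Integral of `f` over the set `A` with respect to the (automatically bounded) signed
Borel measure `μ`, defined via the Jordan decomposition. -/
noncomputable def sInt (μ : MeasureTheory.SignedMeasure ℝ) (A : Set ℝ) (f : ℝ → ℝ) : ℝ :=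
  (∫ t in A, f t ∂μ.toJordanDecomposition.posPart) -
  (∫ t in A, f t ∂μ.toJordanDecomposition.negPart)

/-- `μ_k(τ) = ∫_{[0,1]} (t-τ)^k dμ(t)` (with the convention `0^0 = 1`). -/
noncomputable def muK (μ : MeasureTheory.SignedMeasure ℝ) (k : ℕ) (τ : ℝ) : ℝ :=
  sInt μ (Icc 0 1) (fun t => (t - τ) ^ k)

/-- `μ_k^-(τ) = ∫_{[0,τ)} (t-τ)^k dμ(t)`. -/
noncomputable def muMinus (μ : MeasureTheory.SignedMeasure ℝ) (k : ℕ) (τ : ℝ) : ℝ :=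
  sInt μ (Ico 0 τ) (fun t => (t - τ) ^ k)

/-- `μ_k^+(τ) = ∫_{(τ,1]} (t-τ)^k dμ(t)`. -/
noncomputable def muPlus (μ : MeasureTheory.SignedMeasure ℝ) (k : ℕ) (τ : ℝ) : ℝ :=
  sInt μ (Ioc τ 1) (fun t => (t - τ) ^ k)

/-- The `n`th-order divided difference of `f` at the points `x 0, …, x n`. -/
noncomputable def divDiff (f : ℝ → ℝ) (n : ℕ) (x : Fin (n + 1) → ℝ) : ℝ :=
  ∑ j : Fin (n + 1), f (x j) / ∏ i ∈ Finset.univ.erase j, (x j - x i)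

/-- `f` is `n`-increasing on `I`: all `n`th-order divided differences at pairwise
distinct points of `I` are nonnegative. -/
def nIncreasingOn (f : ℝ → ℝ) (I : Set ℝ) (n : ℕ) : Prop :=
  ∀ x : Fin (n + 1) → ℝ, Function.Injective x → (∀ j, x j ∈ I) → 0 ≤ divDiff f n x

/-- `f` is `n`-decreasing on `I` if `-f` is `n`-increasing on `I`. -/
def nDecreasingOn (f : ℝ → ℝ) (I : Set ℝ) (n : ℕ) : Prop :=
  nIncreasingOn (fun u => -f u) I n

/-- `φ⁺_{p,n}(u) = ((u-p)_+)^n` for `n ≥ 1`, and `φ⁺_{p,0}` is the characteristic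
function of `(p,∞)`. -/
noncomputable def phiPlus (p : ℝ) (n : ℕ) (u : ℝ) : ℝ :=
  if n = 0 then (if p < u then 1 else 0) else (max 0 (u - p)) ^ n

/-- `φ⁻_{p,n}(u) = ((u-p)_−)^n` for `n ≥ 1`, and `φ⁻_{p,0}` is the characteristic
function of `(−∞,p)`. -/
noncomputable def phiMinus (p : ℝ) (n : ℕ) (u : ℝ) : ℝ :=
  if n = 0 then (if u < p then 1 else 0) else (max 0 (p - u)) ^ n

/- The set `J(p)` associated with an interval `I` and a point `p ∈ ℝ`:
`(−∞, (p − inf I)/(sup I − inf I))` if `p ≤ inf I` (interpreted as `(−∞,0)` when `I` is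
unbounded above), `ℝ` if `p ∈ I`, and `(1 + (p − sup I)/(sup I − inf I), ∞)` if
`p ≥ sup I` (interpreted as `(1,∞)` when `I` is unbounded below). -/
open scoped Classical in
noncomputable def Jset (I : Set ℝ) (p : ℝ) : Set ℝ :=
  if p ∈ I then Set.univ
  else if p ∈ lowerBounds I then
    (if BddAbove I then Set.Iio ((p - sInf I) / (sSup I - sInf I)) else Set.Iio 0)
  else
    (if BddBelow I then Set.Ioi (1 + (p - sSup I) / (sSup I - sInf I)) else Set.Ioi 1)

/-!
An increasing affine change of variables carrying `x` to `0` and `y` to `1` carries `φ⁻_{p,n}` to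
`(y - x) ^ n` times `φ⁻_{l,n}`, where `p = (1 - l) x + l y`. Since `x` and `y` may be chosen
arbitrarily close to `p`, every `l : ℝ` occurs, so the inequality for all `x < y` in `I` says that
`∫ φ⁻_{l,n} dμ ≥ 0` for every `l`. This integral is `0` for `l ≤ 0`, `(-1)^n μ_n^-(l)` for
`0 ≤ l ≤ 1` and `(-1)^n μ_n(l)` for `l > 1`; the sign of `(-1)^n μ_n(1)` follows from those of
`(-1)^n μ_n(l)`, `l > 1`, because `μ_n` is continuous.
-/

section

open scoped Topology

variable (μ : SignedMeasure ℝ) (A : Set ℝ) (n : ℕ)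

lemma sInt_const_mul (c : ℝ) (f : ℝ → ℝ) : sInt μ A (fun t => c * f t) = c * sInt μ A f := by
  simp only [sInt, integral_const_mul, mul_sub]

lemma sInt_indicator {s : Set ℝ} (hs : MeasurableSet s) (f : ℝ → ℝ) :
    sInt μ A (s.indicator f) = sInt μ (A ∩ s) f := by
  simp only [sInt, setIntegral_indicator hs]

lemma muMinus_of_nonpos {l : ℝ} (hl : l ≤ 0) : muMinus μ n l = 0 := by
  simp [muMinus, sInt, Ico_eq_empty_of_le hl]

lemma continuous_muK : Continuous (muK μ n) := by
  have hf : Continuous (Function.uncurry fun τ t : ℝ => (t - τ) ^ n) := by fun_prop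
  exact (continuous_parametric_integral_of_continuous hf isCompact_Icc).sub
    (continuous_parametric_integral_of_continuous hf isCompact_Icc)

lemma phiMinus_eq_indicator (p : ℝ) :
    phiMinus p n = (Iio p).indicator fun u => (p - u) ^ n := by
  ext u
  rcases eq_or_ne n 0 with rfl | hn
  · simp [phiMinus, indicator_apply]
  rcases lt_or_ge u p with hu | hu
  · simp [phiMinus, hn, hu, hu.le]
  · simp [phiMinus, hn, hu]

lemma phiMinus_add_mul {c : ℝ} (hc : 0 < c) (b p u : ℝ) :
    phiMinus (b + c * p) n (b + c * u) = c ^ n * phiMinus p n u := by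
  simp only [phiMinus_eq_indicator, indicator_apply, mem_Iio, add_lt_add_iff_left,
    mul_lt_mul_iff_right₀ hc, add_sub_add_left_eq_sub, ← mul_sub, mul_pow, mul_ite, mul_zero]

lemma sInt_phiMinus (l : ℝ) :
    sInt μ A (phiMinus l n) = (-1) ^ n * sInt μ (A ∩ Iio l) (fun t => (t - l) ^ n) := by
  rw [phiMinus_eq_indicator, sInt_indicator μ A measurableSet_Iio, ← sInt_const_mul]
  simp only [← mul_pow, neg_one_mul, neg_sub]

lemma sInt_Icc_phiMinus_of_le_one {l : ℝ} (hl : l ≤ 1) :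
    sInt μ (Icc 0 1) (phiMinus l n) = (-1) ^ n * muMinus μ n l := by
  have hIco : Icc 0 1 ∩ Iio l = Ico 0 l := by
    ext t
    exact ⟨fun ht => ⟨ht.1.1, ht.2⟩, fun ht => ⟨⟨ht.1, ht.2.le.trans hl⟩, ht.2⟩⟩
  rw [sInt_phiMinus, hIco, muMinus]

lemma sInt_Icc_phiMinus_of_one_lt {l : ℝ} (hl : 1 < l) :
    sInt μ (Icc 0 1) (phiMinus l n) = (-1) ^ n * muK μ n l := by
  rw [sInt_phiMinus, inter_eq_left.2 (Icc_subset_Iio_iff zero_le_one |>.2 hl), muK]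

lemma sInt_phiMinus_affineCombination {x y : ℝ} (hxy : x < y) (l : ℝ) :
    sInt μ A (fun t => phiMinus ((1 - l) * x + l * y) n ((1 - t) * x + t * y)) =
      (y - x) ^ n * sInt μ A (phiMinus l n) := by
  have hline (t : ℝ) : (1 - t) * x + t * y = x + (y - x) * t := by ring
  simp only [hline, phiMinus_add_mul n (sub_pos.2 hxy), sInt_const_mul]

lemma exists_lt_affineCombination_eq_of_mem_nhds {I : Set ℝ} {p : ℝ} (hI : I ∈ 𝓝 p) (l : ℝ) :
    ∃ x ∈ I, ∃ y ∈ I, x < y ∧ (1 - l) * x + l * y = p := by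
  have eventually_mem (c : ℝ) : ∀ᶠ ε in 𝓝[>] 0, p + c * ε ∈ I := by
    have hc : Continuous fun ε : ℝ => p + c * ε := by fun_prop
    exact (hc.tendsto' 0 p (by simp)).mono_left nhdsWithin_le_nhds hI
  obtain ⟨ε, hx, hy, hε⟩ :=
    ((eventually_mem (-l)).and ((eventually_mem (1 - l)).and self_mem_nhdsWithin)).exists
  exact ⟨_, hx, _, hy, by linarith, by ring⟩

lemma forall_sInt_phiMinus_affineCombination_nonneg_iff {I : Set ℝ} {p : ℝ} (hI : I ∈ 𝓝 p) :
    (∀ x ∈ I, ∀ y ∈ I, x < y → 0 ≤ sInt μ A (fun t => phiMinus p n ((1 - t) * x + t * y))) ↔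
      ∀ l, 0 ≤ sInt μ A (phiMinus l n) := by
  constructor
  · intro h l
    obtain ⟨x, hx, y, hy, hxy, rfl⟩ := exists_lt_affineCombination_eq_of_mem_nhds hI l
    have hnonneg := h x hx y hy hxy
    rw [sInt_phiMinus_affineCombination μ A n hxy] at hnonneg
    exact nonneg_of_mul_nonneg_right hnonneg (pow_pos (sub_pos.2 hxy) n)
  · intro h x _ y _ hxy
    have hpos : 0 < y - x := sub_pos.2 hxy
    obtain ⟨l, rfl⟩ : ∃ l, p = (1 - l) * x + l * y := ⟨(p - x) / (y - x), by field_simp; ring⟩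
    rw [sInt_phiMinus_affineCombination μ A n hxy]
    exact mul_nonneg (pow_nonneg hpos.le n) (h l)

lemma forall_sInt_Icc_phiMinus_nonneg_iff :
    (∀ l, 0 ≤ sInt μ (Icc 0 1) (phiMinus l n)) ↔
      (∀ l ∈ Icc (0 : ℝ) 1, 0 ≤ (-1 : ℝ) ^ n * muMinus μ n l) ∧
        ∀ l : ℝ, 1 ≤ l → 0 ≤ (-1 : ℝ) ^ n * muK μ n l := by
  constructor
  · refine fun h => ⟨fun l hl => (h l).trans_eq (sInt_Icc_phiMinus_of_le_one μ n hl.2), ?_⟩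
    have hIoi : Ioi 1 ⊆ {l | 0 ≤ (-1 : ℝ) ^ n * muK μ n l} :=
      fun l hl => (h l).trans_eq (sInt_Icc_phiMinus_of_one_lt μ n hl)
    have hclosed : IsClosed {l | 0 ≤ (-1 : ℝ) ^ n * muK μ n l} :=
      isClosed_le continuous_const ((continuous_muK μ n).const_mul _)
    have hIci := closure_minimal hIoi hclosed
    rw [closure_Ioi] at hIci
    exact fun l hl => hIci hl
  · rintro ⟨hMinus, hK⟩ l
    rcases lt_or_ge 1 l with hl | hl
    · exact (hK l hl.le).trans_eq (sInt_Icc_phiMinus_of_one_lt μ n hl).symm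
    rw [sInt_Icc_phiMinus_of_le_one μ n hl]
    rcases le_total 0 l with h0 | h0
    · exact hMinus l ⟨h0, hl⟩
    · rw [muMinus_of_nonpos μ n h0, mul_zero]

theorem stmt7_general {I : Set ℝ} {p : ℝ} (hI : I ∈ 𝓝 p) :
    (∀ x ∈ I, ∀ y ∈ I, x < y →
        0 ≤ sInt μ (Icc 0 1) (fun t => phiMinus p n ((1 - t) * x + t * y))) ↔
      ((∀ lam ∈ Icc (0 : ℝ) 1, 0 ≤ (-1 : ℝ) ^ n * muMinus μ n lam) ∧
        ∀ lam : ℝ, 1 ≤ lam → 0 ≤ (-1 : ℝ) ^ n * muK μ n lam) :=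
  (forall_sInt_phiMinus_affineCombination_nonneg_iff μ (Icc 0 1) n hI).trans
    (forall_sInt_Icc_phiMinus_nonneg_iff μ n)

end

theorem stmt7 (I : Set ℝ) (hIo : IsOpen I) (hIc : I.OrdConnected) (hIne : I.Nonempty)
    (p : ℝ) (hp : p ∈ I) (n : ℕ) (μ : MeasureTheory.SignedMeasure ℝ) :
    (∀ x ∈ I, ∀ y ∈ I, x < y →
        0 ≤ sInt μ (Icc 0 1) (fun t => phiMinus p n ((1 - t) * x + t * y))) ↔
      ((∀ lam ∈ Icc (0:ℝ) 1, 0 ≤ (-1 : ℝ) ^ n * muMinus μ n lam) ∧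
        ∀ lam : ℝ, 1 ≤ lam → 0 ≤ (-1 : ℝ) ^ n * muK μ n lam) :=
  stmt7_general μ n (hIo.mem_nhds hp)
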